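/- Let m ≥ 3 and k ≥ 1 be integers, let f ∈ ℋ_k and u ∈ ℝ^m. Then for every y > 0, c_{m,k} ∫_{ℝ^{m-1}} (y / |(x′,y)|^m) · f(R_{(x′,y)}(u)) dx′ = f(u), where (x′,y) denotes the point of ℝ^m with first m−1 coordinates x′ and last coordinate y (so |(x′,y)|² = |x′|² + y²), and c_{m,k} = 2(m+2k−2)/((m−2)ω_m). In particular the integral is independent of y > 0. -/

import Mathlib

noncomputable section

open MeasureTheory Metric Filter Topology
open scoped RealInnerProductSpace

/-- `ℝ^m` as a Euclidean space. -/
abbrev Evec (m : ℕ) : Type := EuclideanSpace ℝ (Fin m)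

/-- Partial derivative in the `i`-th coordinate direction. -/
def pdv {m : ℕ} (i : Fin m) (f : Evec m → ℝ) (x : Evec m) : ℝ :=
  fderiv ℝ f x (EuclideanSpace.single i 1)

/-- Euclidean Laplacian on `ℝ^m`. -/
def lapl {m : ℕ} (f : Evec m → ℝ) (x : Evec m) : ℝ :=
  ∑ i : Fin m, pdv i (pdv i f) x

/-- `p` is a real-valued polynomial function on `ℝ^m`, homogeneous of degree `k` and
harmonic; i.e. `p ∈ ℋ_k`. -/
def IsHk (m k : ℕ) (p : Evec m → ℝ) : Prop :=
  (∃ P : MvPolynomial (Fin m) ℝ, ∀ x : Evec m, p x = MvPolynomial.eval (fun i => x i) P) ∧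
  (∀ (c : ℝ) (x : Evec m), p (c • x) = c ^ k * p x) ∧
  (∀ x : Evec m, lapl p x = 0)

/-- The surface measure `dS` on the unit sphere `𝕊^{m-1}`, as a measure on `ℝ^m`. -/
def sphereM (m : ℕ) : Measure (Evec m) :=
  Measure.map Subtype.val ((volume : Measure (Evec m)).toSphere)

/-- `ω_m`, the surface area of the unit sphere `𝕊^{m-1}`. -/
def omegaS (m : ℕ) : ℝ := (sphereM m Set.univ).toReal

/-- The constant `c_{m,k} = 2(m+2k-2)/((m-2)ω_m)`. -/
def cmk (m k : ℕ) : ℝ := 2 * ((m : ℝ) + 2 * k - 2) / (((m : ℝ) - 2) * omegaS m)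

/-- The reflection `R_a(u) = u - 2⟨a,u⟩a/|a|²` (in Clifford notation `a u a/|a|²`). -/
def reflv {m : ℕ} (a u : Evec m) : Evec m :=
  u - (2 * ⟪a, u⟫ / ‖a‖ ^ 2) • a

/-- `dim ℋ_k`. -/
def hdim (m k : ℕ) : ℕ :=
  Nat.choose (m + k - 1) (m - 1) - Nat.choose (m + k - 3) (m - 1)

/-- `Z` is the reproducing kernel `Z_k` of `ℋ_k` on the unit sphere: a symmetric,
rotation invariant kernel, bounded by `dim ℋ_k` on the unit ball, belonging to `ℋ_k`
in the first variable and reproducing elements of `ℋ_k` from their spherical values. -/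
def IsZk (m k : ℕ) (Z : Evec m → Evec m → ℝ) : Prop :=
  (∀ v : Evec m, IsHk m k (fun u => Z u v)) ∧
  (∀ p : Evec m → ℝ, IsHk m k p → ∀ v : Evec m, (∫ u, Z u v * p u ∂(sphereM m)) = p v) ∧
  (∀ u v : Evec m, Z u v = Z v u) ∧
  (∀ u v : Evec m, ‖u‖ ≤ 1 → ‖v‖ ≤ 1 → |Z u v| ≤ (hdim m k : ℝ)) ∧
  (∀ (A : Evec m ≃ₗᵢ[ℝ] Evec m) (u v : Evec m), Z (A u) (A v) = Z u v)

/-- The point `(x', y) ∈ ℝ^{d+1}` with first `d` coordinates `x'` and last coordinate `y`. -/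
def upP (d : ℕ) (x' : Evec d) (y : ℝ) : Evec (d + 1) :=
  (EuclideanSpace.equiv (Fin (d + 1)) ℝ).symm
    (Fin.snoc (⇑(EuclideanSpace.equiv (Fin d) ℝ) x') y)

/-- The first `d` coordinates of a point of `ℝ^{d+1}`. -/
def downP (d : ℕ) (x : Evec (d + 1)) : Evec d :=
  (EuclideanSpace.equiv (Fin d) ℝ).symm (fun i => x (Fin.castSucc i))

/-- The last coordinate of a point of `ℝ^{d+1}`. -/
def lastP (d : ℕ) (x : Evec (d + 1)) : ℝ := x (Fin.last d)

/-- The Poisson kernel `P_H` for bosonic Laplacians in the upper half-space `ℝ^{d+1}_+`,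
`P_H(x,t,u,v) = c_{m,k} (y/|x-t|^m) Z_k(R_{x-t}(u), v)` with `m = d+1`, `x = (x',y)`,
`t = (t',0)`. -/
def PH (d k : ℕ) (Z : Evec (d + 1) → Evec (d + 1) → ℝ) (x' : Evec d) (y : ℝ)
    (t' : Evec d) (u v : Evec (d + 1)) : ℝ :=
  cmk (d + 1) k * (y / ‖upP d x' y - upP d t' 0‖ ^ (d + 1)) *
    Z (reflv (upP d x' y - upP d t' 0) u) v

/-- The Poisson integral `P_H[f]` in the upper half-space. -/
def PHint (d k : ℕ) (Z : Evec (d + 1) → Evec (d + 1) → ℝ)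
    (f : Evec d → Evec (d + 1) → ℝ) (x' : Evec d) (y : ℝ) (v : Evec (d + 1)) : ℝ :=
  ∫ t' : Evec d, (∫ u, PH d k Z x' y t' u v * f t' u ∂(sphereM (d + 1)))

/-- The Poisson kernel `P_B` for bosonic Laplacians in the unit ball. -/
def PB (m k : ℕ) (Z : Evec m → Evec m → ℝ) (x ζ ω ν : Evec m) : ℝ :=
  (cmk m k / 2) * ((1 - ‖x‖ ^ 2) / ‖x - ζ‖ ^ m) * Z (reflv (x - ζ) ω) ν

/-- The Poisson integral `P_B[h]` in the unit ball. -/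
def PBint (m k : ℕ) (Z : Evec m → Evec m → ℝ) (h : Evec m → Evec m → ℝ)
    (x ν : Evec m) : ℝ :=
  ∫ ζ, (∫ ω, PB m k Z x ζ ω ν * h ζ ω ∂(sphereM m)) ∂(sphereM m)

/-- Partial derivative in the first (`x`) variable. -/
def pd1 {m : ℕ} (i : Fin m) (f : Evec m → Evec m → ℝ) : Evec m → Evec m → ℝ :=
  fun x u => fderiv ℝ (fun x₁ => f x₁ u) x (EuclideanSpace.single i 1)

/-- Partial derivative in the second (`u`) variable. -/
def pd2 {m : ℕ} (i : Fin m) (f : Evec m → Evec m → ℝ) : Evec m → Evec m → ℝ :=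
  fun x u => fderiv ℝ (fun u₁ => f x u₁) u (EuclideanSpace.single i 1)

/-- The bosonic Laplacian `𝒟_k`. -/
def Dk (m k : ℕ) (f : Evec m → Evec m → ℝ) : Evec m → Evec m → ℝ := fun x u =>
  (∑ i : Fin m, pd1 i (pd1 i f) x u)
    - (4 / ((m : ℝ) + 2 * k - 2)) *
        ∑ i : Fin m, ∑ j : Fin m, u i * pd1 i (pd2 j (pd1 j f)) x u
    + (4 * ‖u‖ ^ 2 / (((m : ℝ) + 2 * k - 2) * ((m : ℝ) + 2 * k - 4))) *
        ∑ i : Fin m, ∑ j : Fin m, pd2 i (pd1 i (pd2 j (pd1 j f))) x u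

/-- `f ∈ C²(Ω×𝔹^m, ℋ_k)`: twice continuously differentiable on `Ω × 𝔹^m` and, for each
fixed `x ∈ Ω`, coinciding in the second variable with an element of `ℋ_k`. -/
def C2Hk (m k : ℕ) (Ω : Set (Evec m)) (f : Evec m → Evec m → ℝ) : Prop :=
  ContDiffOn ℝ 2 (fun q : Evec m × Evec m => f q.1 q.2) (Ω ×ˢ ball (0 : Evec m) 1) ∧
  ∀ x ∈ Ω, ∃ q, IsHk m k q ∧ ∀ u ∈ closedBall (0 : Evec m) 1, f x u = q u

/-- The `L^p` norm `(∫_{ℝ^{m-1}} ∫_{𝕊^{m-1}} |f(x',u)|^p dS(u) dx')^{1/p}` (`m = d+1`),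
valued in `ℝ≥0∞`. -/
def lpH (d : ℕ) (p : ℝ) (f : Evec d → Evec (d + 1) → ℝ) : ENNReal :=
  (∫⁻ x' : Evec d, ∫⁻ u, ENNReal.ofReal (|f x' u| ^ p) ∂(sphereM (d + 1))) ^ (1 / p)

/-- `f ∈ L^p(ℝ^{m-1}×𝔹^m, ℋ_k)` (`m = d+1`). -/
def MemLpH (d k : ℕ) (p : ℝ) (f : Evec d → Evec (d + 1) → ℝ) : Prop :=
  Measurable (fun q : Evec d × Evec (d + 1) => f q.1 q.2) ∧
  (∀ x' : Evec d, ∃ q, IsHk (d + 1) k q ∧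
    ∀ u ∈ closedBall (0 : Evec (d + 1)) 1, f x' u = q u) ∧
  lpH d p f < ⊤

/-- The `L^p` norm `(∫_{𝕊^{m-1}} ∫_{𝕊^{m-1}} |h(ζ,ω)|^p dS(ω) dS(ζ))^{1/p}`,
valued in `ℝ≥0∞`. -/
def lpS (m : ℕ) (p : ℝ) (h : Evec m → Evec m → ℝ) : ENNReal :=
  (∫⁻ ζ, ∫⁻ ω, ENNReal.ofReal (|h ζ ω| ^ p) ∂(sphereM m) ∂(sphereM m)) ^ (1 / p)

/-- `h ∈ L^p(𝕊^{m-1}×𝔹^m, ℋ_k)`. -/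
def MemLpS (m k : ℕ) (p : ℝ) (h : Evec m → Evec m → ℝ) : Prop :=
  Measurable (fun q : Evec m × Evec m => h q.1 q.2) ∧
  (∀ ζ : Evec m, ‖ζ‖ = 1 → ∃ q, IsHk m k q ∧
    ∀ ω ∈ closedBall (0 : Evec m) 1, h ζ ω = q ω) ∧
  lpS m p h < ⊤

/-- Iterated partial derivative `D_x^α` in the first variable, for a multi-index `α ∈ ℕ^m`. -/
def Dx {m : ℕ} (α : Fin m → ℕ) (f : Evec m → Evec m → ℝ) : Evec m → Evec m → ℝ :=
  (List.finRange m).foldr (fun i g => (pd1 i)^[α i] g) f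

/-- Iterated partial derivative `D_ν^β` in the second variable, for a multi-index `β ∈ ℕ^m`. -/
def Dv {m : ℕ} (β : Fin m → ℕ) (f : Evec m → Evec m → ℝ) : Evec m → Evec m → ℝ :=
  (List.finRange m).foldr (fun i g => (pd2 i)^[β i] g) f

/-!
The map `a ↦ f(R_a u)` is constant on punctured lines through the origin. Computing the integral
of `f(R_x u) e^{-|x|²/2}` in polar coordinates, and along the lines joining the origin to the
hyperplane at height `y`, shows that the Poisson integral over the hyperplane is half the integral
of `f(R_ζ u) = f(u - 2⟨ζ,u⟩ζ)` over the sphere; in particular it does not depend on `y`.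

Taylor's formula writes this integrand as `∑ₙ (-2)ⁿ / (k-n)! · ⟨ζ,u⟩ⁿ (∂_u^{k-n} f)(ζ)`, where
`∂_u^{k-n} f` is harmonic of degree `n`. If `Q` is such a polynomial and `L x = ⟨x,u⟩`, integration
by parts against the Gaussian turns a factor `L` into `∂_u`; the terms where `∂_u` hits another `L`
vanish, by induction from the fact that a harmonic polynomial of positive degree integrates to zero.
Hence the Gaussian integral of `Lⁿ Q` is `n! Q(u)` times that of `1`, and polar coordinates give the
integral over the sphere. By Euler's relation `(∂_u^{k-n} f)(u)` is a multiple of `f(u)`, and the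
remaining sum `∑ₙ (-k)ₙ / (m/2)ₙ = (m - 2) / (m + 2k - 2)` telescopes.
-/

section Polynomial

open MvPolynomial

variable {σ R : Type*} [CommRing R]

theorem eval_smul_of_isHomogeneous {P : MvPolynomial σ R} {n : ℕ}
    (hP : P.IsHomogeneous n) (c : R) (x : σ → R) : eval (c • x) P = c ^ n * eval x P := by
  rw [eval_eq, eval_eq, Finset.mul_sum]
  refine Finset.sum_congr rfl fun s hs => ?_
  simp only [Pi.smul_apply, smul_eq_mul, mul_pow, Finset.prod_mul_distrib,
    Finset.prod_pow_eq_pow_sum, ← hP.degree_eq_sum_deg_support hs]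
  ring

theorem isHomogeneous_of_eval_smul [IsDomain R] [Infinite R] {P : MvPolynomial σ R} {k : ℕ}
    (hP : ∀ (c : R) (x : σ → R), eval (c • x) P = c ^ k * eval x P) : P.IsHomogeneous k := by
  have hcomp (x : σ → R) : eval x P = eval x (homogeneousComponent k P) := by
    let p : Polynomial R := ∑ n ∈ Finset.range (P.totalDegree + 1),
      Polynomial.monomial n (eval x (homogeneousComponent n P))
    have hp : p = Polynomial.monomial k (eval x P) := Polynomial.funext fun t => by
      rw [Polynomial.eval_monomial, mul_comm, ← hP t x]
      conv_rhs => rw [← sum_homogeneousComponent P]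
      simp only [p, map_sum, Polynomial.eval_finsetSum, Polynomial.eval_monomial,
        eval_smul_of_isHomogeneous (homogeneousComponent_isHomogeneous _ P), mul_comm]
    have hk := congrArg (Polynomial.coeff · k) hp
    simp only [p, Polynomial.finsetSum_coeff, Polynomial.coeff_monomial, Finset.sum_ite_eq',
      Finset.mem_range, if_true] at hk
    rw [← hk, ite_eq_left_iff, not_lt]
    intro hlt
    rw [homogeneousComponent_eq_zero _ _ hlt, map_zero]
  rw [MvPolynomial.funext hcomp]
  exact homogeneousComponent_isHomogeneous k P

/-- The directional derivative `∂_u` on polynomials, bundled as a derivation. -/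
def dirDeriv (u : σ → R) : Derivation R (MvPolynomial σ R) (MvPolynomial σ R) :=
  mkDerivation R fun i => C (u i)

theorem dirDeriv_X (u : σ → R) (i : σ) : dirDeriv u (X i) = C (u i) :=
  mkDerivation_X ..

theorem dirDeriv_single [DecidableEq σ] (i : σ) :
    dirDeriv (Pi.single i (1 : R)) = pderiv i := by
  refine derivation_ext fun j => ?_
  rw [dirDeriv_X, pderiv_X]
  exact Pi.apply_single (fun _ => C) (fun _ => C_0) i 1 j

theorem dirDeriv_comm (u v : σ → R) (P : MvPolynomial σ R) :
    dirDeriv u (dirDeriv v P) = dirDeriv v (dirDeriv u P) := by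
  have h : ⁅dirDeriv u, dirDeriv v⁆ = 0 := derivation_ext fun i => by
    simp only [Derivation.commutator_apply, dirDeriv_X, derivation_C, sub_self,
      Derivation.zero_apply]
  rw [← sub_eq_zero, ← Derivation.commutator_apply, h, Derivation.zero_apply]

theorem dirDeriv_eq_sum [Fintype σ] (u : σ → R) (P : MvPolynomial σ R) :
    dirDeriv u P = ∑ i, C (u i) * pderiv i P := by
  classical
  induction P using MvPolynomial.induction_on with
  | C a => simp
  | add P Q hP hQ => simp only [map_add, hP, hQ, mul_add, Finset.sum_add_distrib]
  | mul_X P j hP =>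
    have hX : ∑ i, C (u i) * pderiv i (X j : MvPolynomial σ R) = C (u j) := by
      simp [pderiv_X, Pi.single_apply]
    simp only [Derivation.leibniz, smul_eq_mul, dirDeriv_X, hP, ← hX, mul_add,
      Finset.sum_add_distrib, Finset.mul_sum, mul_left_comm]

theorem isHomogeneous_dirDeriv [Finite σ] {P : MvPolynomial σ R} {n : ℕ}
    (hP : P.IsHomogeneous n) (u : σ → R) : (dirDeriv u P).IsHomogeneous (n - 1) := by
  cases nonempty_fintype σ
  rw [dirDeriv_eq_sum]
  exact IsHomogeneous.sum _ _ _ fun i _ => hP.pderiv.C_mul (u i)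

theorem isHomogeneous_iterate_dirDeriv [Finite σ] {P : MvPolynomial σ R} {n : ℕ}
    (hP : P.IsHomogeneous n) (u : σ → R) (j : ℕ) :
    ((dirDeriv u)^[j] P).IsHomogeneous (n - j) := by
  induction j with
  | zero => exact hP
  | succ j ih =>
    rw [Function.iterate_succ_apply', ← Nat.sub_sub]
    exact isHomogeneous_dirDeriv ih u

theorem eval_self_dirDeriv [Finite σ] {P : MvPolynomial σ R} {n : ℕ}
    (hP : P.IsHomogeneous n) (u : σ → R) : eval u (dirDeriv u P) = n * eval u P := by
  cases nonempty_fintype σ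
  simpa [dirDeriv_eq_sum] using congrArg (eval u) hP.sum_X_mul_pderiv

theorem eval_self_iterate_dirDeriv [Finite σ] {P : MvPolynomial σ R} {n : ℕ}
    (hP : P.IsHomogeneous n) (u : σ → R) (j : ℕ) :
    eval u ((dirDeriv u)^[j] P) = n.descFactorial j * eval u P := by
  induction j with
  | zero => simp
  | succ j ih =>
    rw [Function.iterate_succ_apply', eval_self_dirDeriv (isHomogeneous_iterate_dirDeriv hP u j),
      ih, Nat.descFactorial_succ]
    push_cast
    ring

variable [Fintype σ]

/-- The linear form `x ↦ ∑ i, u i * x i` as a polynomial. -/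
def linForm (u : σ → R) : MvPolynomial σ R :=
  ∑ i, C (u i) * X i

theorem isHomogeneous_linForm (u : σ → R) : (linForm u).IsHomogeneous 1 :=
  IsHomogeneous.sum _ _ _ fun i _ => isHomogeneous_C_mul_X (u i) i

theorem dirDeriv_linForm (u v : σ → R) : dirDeriv v (linForm u) = C (u ⬝ᵥ v) := by
  simp [linForm, dotProduct, dirDeriv_X]

theorem dirDeriv_linForm_pow_mul (u : σ → R) (a : ℕ) (P : MvPolynomial σ R) :
    dirDeriv u (linForm u ^ a * P) =
      (a * (u ⬝ᵥ u)) • (linForm u ^ (a - 1) * P) + linForm u ^ a * dirDeriv u P := by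
  rw [Derivation.leibniz, Derivation.leibniz_pow, dirDeriv_linForm, smul_eq_C_mul]
  simp only [smul_eq_mul, nsmul_eq_mul, map_mul, map_natCast]
  ring

/-- The Laplacian `∑ i, ∂ᵢ²` on polynomials, as a linear map. -/
def mvLaplacian : MvPolynomial σ R →ₗ[R] MvPolynomial σ R :=
  ∑ i, (pderiv i).toLinearMap ∘ₗ (pderiv i).toLinearMap

theorem mvLaplacian_apply (P : MvPolynomial σ R) :
    mvLaplacian P = ∑ i, pderiv i (pderiv i P) := by
  simp [mvLaplacian, LinearMap.sum_apply]

theorem mvLaplacian_dirDeriv (u : σ → R) (P : MvPolynomial σ R) :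
    mvLaplacian (dirDeriv u P) = dirDeriv u (mvLaplacian P) := by
  classical
  simp only [mvLaplacian_apply, map_sum, ← dirDeriv_single, dirDeriv_comm u]

theorem mvLaplacian_iterate_dirDeriv (u : σ → R) (j : ℕ) (P : MvPolynomial σ R) :
    mvLaplacian ((dirDeriv u)^[j] P) = (dirDeriv u)^[j] (mvLaplacian P) :=
  Function.Commute.iterate_right (f := mvLaplacian) (mvLaplacian_dirDeriv u) j P

end Polynomial

section Taylor

open MvPolynomial

variable {σ R : Type*} [CommRing R]

/-- The restriction `X ↦ P (x + X u)` of a polynomial to the line through `x` along `u`. -/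
def lineRestrict (x u : σ → R) : MvPolynomial σ R →ₐ[R] Polynomial R :=
  aeval fun i => Polynomial.C (x i) + Polynomial.C (u i) * Polynomial.X

theorem lineRestrict_X (x u : σ → R) (i : σ) :
    lineRestrict x u (X i) = Polynomial.C (x i) + Polynomial.C (u i) * Polynomial.X :=
  aeval_X ..

theorem eval_lineRestrict (x u : σ → R) (P : MvPolynomial σ R) (t : R) :
    (lineRestrict x u P).eval t = eval (x + t • u) P := by
  induction P using MvPolynomial.induction_on with
  | C a => simp [lineRestrict]
  | add P Q hP hQ => simp only [map_add, Polynomial.eval_add, hP, hQ]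
  | mul_X P i hP => simp [lineRestrict_X, hP, mul_comm t]

theorem derivative_lineRestrict (x u : σ → R) (P : MvPolynomial σ R) :
    (lineRestrict x u P).derivative = lineRestrict x u (dirDeriv u P) := by
  induction P using MvPolynomial.induction_on with
  | C a => simp [lineRestrict]
  | add P Q hP hQ => simp only [map_add, hP, hQ]
  | mul_X P i hP =>
    simp only [Derivation.leibniz, hP, dirDeriv_X, lineRestrict_X, map_mul, map_add, algHom_C,
      smul_eq_mul, Polynomial.algebraMap_eq, Polynomial.derivative_mul, Polynomial.derivative_C,
      Polynomial.derivative_X, zero_mul, zero_add, mul_one]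
    ring

theorem iterate_derivative_lineRestrict (x u : σ → R) (P : MvPolynomial σ R) (j : ℕ) :
    Polynomial.derivative^[j] (lineRestrict x u P) = lineRestrict x u ((dirDeriv u)^[j] P) :=
  (Function.Semiconj.iterate_right (f := lineRestrict x u)
    (fun P => (derivative_lineRestrict x u P).symm) j P).symm

theorem natDegree_lineRestrict_le (x u : σ → R) {P : MvPolynomial σ R} {n : ℕ}
    (hP : P.totalDegree ≤ n) : (lineRestrict x u P).natDegree ≤ n := by
  have h := aeval_natDegree_le P hP
    (fun i => Polynomial.C (x i) + Polynomial.C (u i) * Polynomial.X) (n := 1) fun i => by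
      compute_degree
  simpa [lineRestrict] using h

theorem factorial_mul_coeff_lineRestrict (x u : σ → R) (P : MvPolynomial σ R) (j : ℕ) :
    j.factorial * (lineRestrict x u P).coeff j = eval x ((dirDeriv u)^[j] P) := by
  have h := Polynomial.coeff_iterate_derivative (k := j) (lineRestrict x u P) 0
  rw [iterate_derivative_lineRestrict, Polynomial.coeff_zero_eq_eval_zero, eval_lineRestrict,
    zero_smul, add_zero, zero_add, Nat.descFactorial_self, nsmul_eq_mul] at h
  exact h.symm

theorem eval_add_eq_sum_iterate_dirDeriv {K : Type*} [Field K] [CharZero K] (x u : σ → K)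
    {P : MvPolynomial σ K} {n : ℕ} (hP : P.totalDegree ≤ n) :
    eval (x + u) P = ∑ j ∈ Finset.range (n + 1), eval x ((dirDeriv u)^[j] P) / j.factorial := by
  have hcoeff (j : ℕ) :
      (lineRestrict x u P).coeff j = eval x ((dirDeriv u)^[j] P) / j.factorial := by
    rw [← factorial_mul_coeff_lineRestrict,
      mul_div_cancel_left₀ _ (Nat.cast_ne_zero.mpr j.factorial_ne_zero)]
  have h := Polynomial.eval_eq_sum_range'
    (Nat.lt_succ_of_le (natDegree_lineRestrict_le x u hP)) 1
  simpa only [eval_lineRestrict, one_smul, hcoeff, one_pow, mul_one] using h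

end Taylor

section Polar

variable {E : Type*} [NormedAddCommGroup E] [NormedSpace ℝ E]

theorem integral_volumeIoiPow (n : ℕ) (g : ℝ → ℝ) :
    ∫ r, g r ∂Measure.volumeIoiPow n = ∫ r in Set.Ioi (0 : ℝ), r ^ n * g r := by
  simp only [Measure.volumeIoiPow, ENNReal.ofReal]
  rw [integral_withDensity_eq_integral_smul (measurable_subtype_coe.pow_const n).real_toNNReal,
    integral_subtype_comap measurableSet_Ioi fun r => Real.toNNReal (r ^ n) • g r]
  refine setIntegral_congr_fun measurableSet_Ioi fun r (hr : 0 < r) => ?_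
  rw [NNReal.smul_def, Real.coe_toNNReal _ (pow_nonneg hr.le n), smul_eq_mul]

theorem integrable_volumeIoiPow_iff (n : ℕ) (g : ℝ → ℝ) :
    Integrable (fun r : Set.Ioi (0 : ℝ) => g r) (Measure.volumeIoiPow n) ↔
      IntegrableOn (fun r => r ^ n * g r) (Set.Ioi 0) := by
  simp only [Measure.volumeIoiPow, ENNReal.ofReal]
  rw [integrable_withDensity_iff_integrable_smul
    (measurable_subtype_coe.pow_const n).real_toNNReal,
    integrableOn_iff_comap_subtypeVal measurableSet_Ioi]
  refine integrable_congr (.of_forall fun r => ?_)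
  simp only [NNReal.smul_def, Real.coe_toNNReal _ (pow_nonneg r.2.out.le n), smul_eq_mul,
    Function.comp_apply]

theorem mul_radial_eq_comp_homeomorphUnitSphereProd {h : E → ℝ} {n : ℕ}
    (hh : ∀ c : ℝ, 0 < c → ∀ x, h (c • x) = c ^ n * h x) (w : ℝ → ℝ) (x : ({0}ᶜ : Set E)) :
    h x * w ‖(x : E)‖ = h (homeomorphUnitSphereProd E x).1 *
      ((homeomorphUnitSphereProd E x).2 ^ n * w (homeomorphUnitSphereProd E x).2) := by
  have hx : 0 < ‖(x : E)‖ := norm_pos_iff.mpr x.2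
  have hpolar := hh ‖(x : E)‖ hx ((homeomorphUnitSphereProd E x).1 : E)
  rw [homeomorphUnitSphereProd_apply_fst_coe, smul_inv_smul₀ hx.ne'] at hpolar
  rw [homeomorphUnitSphereProd_apply_snd_coe, homeomorphUnitSphereProd_apply_fst_coe, hpolar]
  ring

variable [Nontrivial E] [FiniteDimensional ℝ E] [MeasurableSpace E] [BorelSpace E]
  (μ : Measure E) [μ.IsAddHaarMeasure]

theorem integral_mul_radial_eq_integral_toSphere_mul {h : E → ℝ} {n : ℕ}
    (hh : ∀ c : ℝ, 0 < c → ∀ x, h (c • x) = c ^ n * h x) (w : ℝ → ℝ) :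
    ∫ x, h x * w ‖x‖ ∂μ = (∫ ζ, h ζ ∂μ.toSphere) *
      ∫ r in Set.Ioi (0 : ℝ), r ^ (Module.finrank ℝ E - 1 + n) * w r :=
  calc
    ∫ x, h x * w ‖x‖ ∂μ = ∫ x : ({0}ᶜ : Set E), h x * w ‖(x : E)‖ ∂(μ.comap (↑)) := by
      rw [integral_subtype_comap (measurableSet_singleton _).compl fun x => h x * w ‖x‖,
        restrict_compl_singleton]
    _ = ∫ p, h p.1 * (p.2 ^ n * w p.2)
          ∂μ.toSphere.prod (Measure.volumeIoiPow (Module.finrank ℝ E - 1)) := by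
      simp only [mul_radial_eq_comp_homeomorphUnitSphereProd hh]
      exact μ.measurePreserving_homeomorphUnitSphereProd.integral_comp
        (Homeomorph.measurableEmbedding _) fun p => h p.1 * (p.2 ^ n * w p.2)
    _ = _ := by
      rw [integral_prod_mul (fun ζ : sphere (0 : E) 1 => h ζ)
        fun r : Set.Ioi (0 : ℝ) => (r : ℝ) ^ n * w r,
        integral_volumeIoiPow _ fun r => r ^ n * w r]
      simp only [pow_add, mul_assoc]

theorem integrable_mul_radial {h : E → ℝ} {n : ℕ}
    (hh : ∀ c : ℝ, 0 < c → ∀ x, h (c • x) = c ^ n * h x) {w : ℝ → ℝ}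
    (hsphere : Integrable (fun ζ : sphere (0 : E) 1 => h ζ) μ.toSphere)
    (hw : IntegrableOn (fun r => r ^ (Module.finrank ℝ E - 1 + n) * w r) (Set.Ioi 0)) :
    Integrable (fun x => h x * w ‖x‖) μ := by
  simp only [pow_add, mul_assoc] at hw
  have hprod := hsphere.mul_prod ((integrable_volumeIoiPow_iff _ fun r => r ^ n * w r).mpr hw)
  rw [← restrict_compl_singleton (μ := μ) 0, ← IntegrableOn,
    integrableOn_iff_comap_subtypeVal (measurableSet_singleton _).compl]
  refine (Iff.mpr (μ.measurePreserving_homeomorphUnitSphereProd.integrable_comp_emb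
    (Homeomorph.measurableEmbedding _)) hprod).congr (.of_forall fun x => ?_)
  exact (mul_radial_eq_comp_homeomorphUnitSphereProd hh w x).symm

end Polar

section RadialMoment

/-- The radial Gaussian moment `∫₀^∞ r ^ q e^{-r²/2} dr`. -/
def radialMoment (q : ℕ) : ℝ :=
  ∫ r in Set.Ioi (0 : ℝ), r ^ q * Real.exp (-r ^ 2 / 2)

theorem radialMoment_eq_Gamma (q : ℕ) :
    radialMoment q =
      (1 / 2 : ℝ) ^ (-((q : ℝ) + 1) / 2) * (1 / 2) * Real.Gamma (((q : ℝ) + 1) / 2) := by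
  rw [← integral_rpow_mul_exp_neg_mul_rpow (p := 2) (q := q) (b := 1 / 2) (by norm_num)
    (by linarith [q.cast_nonneg (α := ℝ)]) (by norm_num), radialMoment]
  simp only [Real.rpow_natCast, Real.rpow_two, neg_mul, neg_div, one_div_mul_eq_div]

theorem integrableOn_pow_mul_exp_neg_sq_div_two (q : ℕ) :
    IntegrableOn (fun r : ℝ => r ^ q * Real.exp (-r ^ 2 / 2)) (Set.Ioi 0) := by
  have h := integrableOn_rpow_mul_exp_neg_mul_sq (s := q) (b := 1 / 2) (by norm_num)
    (by linarith [q.cast_nonneg (α := ℝ)])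
  simpa [Real.rpow_natCast, neg_div, div_eq_inv_mul] using h

theorem radialMoment_pos (q : ℕ) : 0 < radialMoment q := by
  rw [radialMoment_eq_Gamma]
  have := Real.Gamma_pos_of_pos (s := ((q : ℝ) + 1) / 2) (by positivity)
  positivity

theorem radialMoment_add_two (q : ℕ) : radialMoment (q + 2) = (q + 1) * radialMoment q := by
  rw [radialMoment_eq_Gamma, radialMoment_eq_Gamma]
  have hGamma : (((q + 2 : ℕ) : ℝ) + 1) / 2 = ((q : ℝ) + 1) / 2 + 1 := by push_cast; ring
  have hpow : -(((q + 2 : ℕ) : ℝ) + 1) / 2 = -((q : ℝ) + 1) / 2 - 1 := by push_cast; ring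
  rw [hGamma, hpow, Real.Gamma_add_one (by positivity), Real.rpow_sub_one (by norm_num)]
  ring

theorem radialMoment_add_two_mul (q n : ℕ) :
    radialMoment (q + 2 * n) =
      2 ^ n * (ascPochhammer ℝ n).eval ((q + 1 : ℝ) / 2) * radialMoment q := by
  induction n with
  | zero => simp
  | succ n ih =>
    rw [mul_add_one, ← add_assoc, radialMoment_add_two, ih, ascPochhammer_succ_eval]
    push_cast
    ring

theorem integral_pow_mul_exp_neg_mul_sq_div_two (q : ℕ) {r : ℝ} (hr : 0 < r) :
    ∫ t in Set.Ioi (0 : ℝ), t ^ q * Real.exp (-(t * r) ^ 2 / 2) =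
      radialMoment q / r ^ (q + 1) := by
  have h := integral_comp_mul_right_Ioi (fun t : ℝ => t ^ q * Real.exp (-t ^ 2 / 2)) 0 hr
  simp only [mul_pow _ r q, mul_right_comm _ (r ^ q), integral_mul_const, zero_mul] at h
  rw [eq_div_iff (by positivity), pow_succ, ← mul_assoc, h, smul_eq_mul, mul_comm,
    mul_inv_cancel_left₀ hr.ne', radialMoment]

theorem integral_abs_pow_mul_exp_neg_mul_sq_div_two (q : ℕ) {r : ℝ} (hr : 0 < r) :
    ∫ t : ℝ, |t| ^ q * Real.exp (-(t * r) ^ 2 / 2) = 2 * radialMoment q / r ^ (q + 1) := by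
  have h := integral_comp_abs (f := fun t => t ^ q * Real.exp (-(t * r) ^ 2 / 2))
  simp only [mul_pow, sq_abs] at h ⊢
  rw [h]
  simp only [← mul_pow]
  rw [integral_pow_mul_exp_neg_mul_sq_div_two q hr, mul_div_assoc]

end RadialMoment

section Gaussian

open MvPolynomial

variable {σ : Type*}

theorem differentiable_eval [Finite σ] (P : MvPolynomial σ ℝ) :
    Differentiable ℝ fun x : EuclideanSpace ℝ σ => eval x.ofLp P := by
  cases nonempty_fintype σ
  exact fun x => (AnalyticOnNhd.eval_continuousLinearMap
    (EuclideanSpace.equiv σ ℝ : EuclideanSpace ℝ σ →L[ℝ] σ → ℝ) P x trivial).differentiableAt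

theorem fderiv_eval_apply [Finite σ] (P : MvPolynomial σ ℝ) (x v : EuclideanSpace ℝ σ) :
    fderiv ℝ (fun x : EuclideanSpace ℝ σ => eval x.ofLp P) x v =
      eval x.ofLp (dirDeriv v.ofLp P) := by
  cases nonempty_fintype σ
  rw [← (differentiable_eval P x).lineDeriv_eq_fderiv, lineDeriv]
  simp only [WithLp.ofLp_add, WithLp.ofLp_smul, ← eval_lineRestrict, Polynomial.deriv,
    derivative_lineRestrict]
  rw [eval_lineRestrict, zero_smul, add_zero]

variable [Fintype σ]

theorem eval_linForm_eq_inner (u x : EuclideanSpace ℝ σ) :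
    eval x.ofLp (linForm u.ofLp) = ⟪x, u⟫ := by
  simp [linForm, PiLp.inner_apply]

theorem integrable_eval_toSphere (P : MvPolynomial σ ℝ) :
    Integrable (fun ζ : sphere (0 : EuclideanSpace ℝ σ) 1 => eval ζ.1.ofLp P)
      (volume : Measure (EuclideanSpace ℝ σ)).toSphere :=
  ((differentiable_eval P).continuous.comp continuous_subtype_val).integrable_of_hasCompactSupport
    (HasCompactSupport.of_compactSpace _)

theorem hasFDerivAt_exp_neg_sq_div_two {E : Type*} [NormedAddCommGroup E]
    [InnerProductSpace ℝ E] (x : E) :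
    HasFDerivAt (fun x : E => Real.exp (-‖x‖ ^ 2 / 2))
      (-(Real.exp (-‖x‖ ^ 2 / 2) • innerSL ℝ x)) x := by
  have h := ((hasStrictFDerivAt_norm_sq x).hasFDerivAt.neg.mul_const (1 / 2 : ℝ)).exp
  convert! h using 1
  · simp [div_eq_mul_inv]
  · ext v
    simp [div_eq_mul_inv]

theorem fderiv_exp_neg_sq_div_two_apply {E : Type*} [NormedAddCommGroup E]
    [InnerProductSpace ℝ E] (x v : E) :
    fderiv ℝ (fun x : E => Real.exp (-‖x‖ ^ 2 / 2)) x v =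
      -(⟪x, v⟫ * Real.exp (-‖x‖ ^ 2 / 2)) := by
  rw [(hasFDerivAt_exp_neg_sq_div_two x).fderiv]
  simp [mul_comm]

variable [Nonempty σ]

theorem integrable_eval_mul_exp_neg_sq_div_two (P : MvPolynomial σ ℝ) :
    Integrable fun x : EuclideanSpace ℝ σ => eval x.ofLp P * Real.exp (-‖x‖ ^ 2 / 2) := by
  have hcomp (n : ℕ) : Integrable fun x : EuclideanSpace ℝ σ =>
      eval x.ofLp (homogeneousComponent n P) * Real.exp (-‖x‖ ^ 2 / 2) :=
    integrable_mul_radial volume (w := fun r => Real.exp (-r ^ 2 / 2))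
      (fun c _ x => eval_smul_of_isHomogeneous (homogeneousComponent_isHomogeneous n P) c x.ofLp)
      (integrable_eval_toSphere _) (integrableOn_pow_mul_exp_neg_sq_div_two _)
  simpa only [← Finset.sum_mul, ← map_sum, sum_homogeneousComponent] using
    integrable_finsetSum (Finset.range (P.totalDegree + 1)) fun n _ => hcomp n

/-- The unnormalised Gaussian integral `P ↦ ∫ P(x) e^{-|x|²/2} dx`, as a linear functional on
polynomials. -/
def gaussianIntegral : MvPolynomial σ ℝ →ₗ[ℝ] ℝ where
  toFun P := ∫ x : EuclideanSpace ℝ σ, eval x.ofLp P * Real.exp (-‖x‖ ^ 2 / 2)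
  map_add' P Q := by
    simp only [map_add, add_mul]
    exact integral_add (integrable_eval_mul_exp_neg_sq_div_two P)
      (integrable_eval_mul_exp_neg_sq_div_two Q)
  map_smul' c P := by
    simp only [smul_eval, mul_assoc, integral_const_mul, RingHom.id_apply, smul_eq_mul]

theorem gaussianIntegral_eq_integral_toSphere_mul {P : MvPolynomial σ ℝ} {n : ℕ}
    (hP : P.IsHomogeneous n) :
    gaussianIntegral P =
      (∫ ζ, eval ζ.1.ofLp P ∂(volume : Measure (EuclideanSpace ℝ σ)).toSphere) *
        radialMoment (Fintype.card σ - 1 + n) := by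
  rw [← finrank_euclideanSpace (𝕜 := ℝ)]
  exact integral_mul_radial_eq_integral_toSphere_mul volume
    (fun c _ x => eval_smul_of_isHomogeneous hP c x.ofLp) fun r => Real.exp (-r ^ 2 / 2)

theorem gaussianIntegral_linForm_mul (u : σ → ℝ) (P : MvPolynomial σ ℝ) :
    gaussianIntegral (linForm u * P) = gaussianIntegral (dirDeriv u P) := by
  let v : EuclideanSpace ℝ σ := WithLp.toLp 2 u
  let w (x : EuclideanSpace ℝ σ) : ℝ := Real.exp (-‖x‖ ^ 2 / 2)
  have hderiv (x : EuclideanSpace ℝ σ) :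
      eval x.ofLp P * fderiv ℝ w x v = -(eval x.ofLp (linForm u * P) * w x) := by
    rw [fderiv_exp_neg_sq_div_two_apply, map_mul, ← eval_linForm_eq_inner]
    ring
  have hparts := integral_mul_fderiv_eq_neg_fderiv_mul_of_integrable (𝕜 := ℝ) (μ := volume)
    (f := fun x : EuclideanSpace ℝ σ => eval x.ofLp P) (g := w) (v := v)
  simp only [hderiv, fderiv_eval_apply, integral_neg, neg_inj] at hparts
  exact hparts (integrable_eval_mul_exp_neg_sq_div_two _)
    (integrable_eval_mul_exp_neg_sq_div_two _).neg (integrable_eval_mul_exp_neg_sq_div_two _)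
    (fun x _ => differentiable_eval P x)
    fun x _ => (hasFDerivAt_exp_neg_sq_div_two x).differentiableAt

theorem gaussianIntegral_linForm_pow_succ_mul (u : σ → ℝ) (a : ℕ) (P : MvPolynomial σ ℝ) :
    gaussianIntegral (linForm u ^ (a + 1) * P) =
      a * (u ⬝ᵥ u) * gaussianIntegral (linForm u ^ (a - 1) * P) +
        gaussianIntegral (linForm u ^ a * dirDeriv u P) := by
  rw [pow_succ', mul_assoc, gaussianIntegral_linForm_mul, dirDeriv_linForm_pow_mul, map_add,
    map_smul, smul_eq_mul]

theorem gaussianIntegral_eq_zero_of_harmonic {Q : MvPolynomial σ ℝ} {n : ℕ} (hn : n ≠ 0)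
    (hQ : Q.IsHomogeneous n) (hΔ : mvLaplacian Q = 0) : gaussianIntegral Q = 0 := by
  classical
  have hX (i : σ) : (X i : MvPolynomial σ ℝ) = linForm (Pi.single i 1) := by
    simp [linForm, Pi.single_apply]
  have hEuler : (n : ℝ) * gaussianIntegral Q = gaussianIntegral (mvLaplacian Q) := by
    rw [← nsmul_eq_mul, ← map_nsmul, ← hQ.sum_X_mul_pderiv, mvLaplacian_apply, map_sum, map_sum]
    refine Finset.sum_congr rfl fun i _ => ?_
    rw [hX, gaussianIntegral_linForm_mul, dirDeriv_single]
  rw [hΔ, map_zero, mul_eq_zero, Nat.cast_eq_zero] at hEuler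
  exact hEuler.resolve_left hn

theorem gaussianIntegral_linForm_pow_mul_eq_zero (u : σ → ℝ) {a n : ℕ} (han : a < n)
    {Q : MvPolynomial σ ℝ} (hQ : Q.IsHomogeneous n) (hΔ : mvLaplacian Q = 0) :
    gaussianIntegral (linForm u ^ a * Q) = 0 := by
  induction a using Nat.strong_induction_on generalizing n Q with
  | _ a ih =>
    obtain _ | a := a
    · rw [pow_zero, one_mul, gaussianIntegral_eq_zero_of_harmonic han.ne' hQ hΔ]
    · rw [gaussianIntegral_linForm_pow_succ_mul, ih (a - 1) (by omega) (by omega) hQ hΔ,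
        ih a (by omega) (by omega) (isHomogeneous_dirDeriv hQ u)
          (by rw [mvLaplacian_dirDeriv, hΔ, map_zero]), mul_zero, add_zero]

theorem gaussianIntegral_linForm_pow_mul_of_harmonic (u : σ → ℝ) {n : ℕ} {Q : MvPolynomial σ ℝ}
    (hQ : Q.IsHomogeneous n) (hΔ : mvLaplacian Q = 0) :
    gaussianIntegral (linForm u ^ n * Q) =
      n.factorial * eval u Q * gaussianIntegral (1 : MvPolynomial σ ℝ) := by
  induction n generalizing Q with
  | zero =>
    obtain ⟨c, rfl⟩ : ∃ c, Q = C c :=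
      ⟨_, totalDegree_eq_zero_iff_eq_C.mp (Nat.le_zero.mp hQ.totalDegree_le)⟩
    rw [pow_zero, one_mul, eval_C, Nat.factorial_zero, Nat.cast_one, one_mul, C_eq_smul_one,
      map_smul, smul_eq_mul]
  | succ n ih =>
    rw [gaussianIntegral_linForm_pow_succ_mul,
      gaussianIntegral_linForm_pow_mul_eq_zero u (by omega) hQ hΔ,
      ih (isHomogeneous_dirDeriv hQ u) (by rw [mvLaplacian_dirDeriv, hΔ, map_zero]),
      eval_self_dirDeriv hQ, Nat.factorial_succ]
    push_cast
    ring

end Gaussian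

section HalfSpace

theorem lintegral_comp_smul {E : Type*} [NormedAddCommGroup E] [NormedSpace ℝ E]
    [FiniteDimensional ℝ E] [MeasurableSpace E] [BorelSpace E] (μ : Measure E)
    [μ.IsAddHaarMeasure] (g : E → ENNReal) {c : ℝ} (hc : c ≠ 0) :
    ENNReal.ofReal (|c| ^ Module.finrank ℝ E) * ∫⁻ x, g (c • x) ∂μ = ∫⁻ x, g x ∂μ := by
  rw [← (measurableEmbedding_const_smul₀ hc).lintegral_map, Measure.map_addHaar_smul μ hc,
    lintegral_smul_measure, smul_eq_mul, ← mul_assoc, ← ENNReal.ofReal_mul (by positivity),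
    abs_inv, abs_pow, mul_inv_cancel₀ (by positivity), ENNReal.ofReal_one, one_mul]

theorem upP_castSucc {d : ℕ} (z : Evec d) (y : ℝ) (i : Fin d) : upP d z y i.castSucc = z i := by
  simp [upP]

theorem upP_last {d : ℕ} (z : Evec d) (y : ℝ) : upP d z y (Fin.last d) = y := by
  simp [upP]

theorem smul_upP {d : ℕ} (c : ℝ) (z : Evec d) (y : ℝ) :
    c • upP d z y = upP d (c • z) (c * y) := by
  ext i
  cases i using Fin.lastCases <;> simp [upP_last, upP_castSucc]

theorem upP_ne_zero {d : ℕ} (z : Evec d) {y : ℝ} (hy : y ≠ 0) : upP d z y ≠ 0 := fun h =>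
  hy (by rw [← upP_last z y, h, PiLp.zero_apply])

theorem measurePreserving_upP (d : ℕ) :
    MeasurePreserving (fun p : ℝ × Evec d => upP d p.2 p.1) := by
  have h := ((EuclideanSpace.volume_preserving_symm_measurableEquiv_toLp _).symm.comp
    (volume_preserving_piFinSuccAbove (fun _ : Fin (d + 1) => ℝ) (Fin.last d)).symm).comp
    ((MeasurePreserving.id (volume : Measure ℝ)).prod
      (EuclideanSpace.volume_preserving_symm_measurableEquiv_toLp (Fin d)))
  convert! h using 1
  ext p i
  cases i using Fin.lastCases <;> simp [upP_last, upP_castSucc]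

/-- The Lebesgue measure in the coordinates `(t, z) ↦ t (z, y)` given by the lines through the
origin and the hyperplane at height `y`. -/
def coneMeasure (d : ℕ) (y : ℝ) : Measure (ℝ × Evec d) :=
  (volume.withDensity fun t : ℝ => ENNReal.ofReal (|y| * |t| ^ d)).prod volume

theorem measurePreserving_smul_upP (d : ℕ) {y : ℝ} (hy : y ≠ 0) :
    MeasurePreserving (fun p : ℝ × Evec d => p.1 • upP d p.2 y) (coneMeasure d y) volume := by
  have hmeas : Measurable fun p : ℝ × Evec d => p.1 • upP d p.2 y :=
    measurable_fst.smul ((measurePreserving_upP d).measurable.comp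
      (measurable_const.prodMk measurable_snd))
  refine ⟨hmeas, Measure.ext_of_lintegral _ fun g hg => ?_⟩
  have hslice (t : ℝ) (ht : t ≠ 0) :
      ENNReal.ofReal (|t| ^ d) * ∫⁻ z, g (t • upP d z y) = ∫⁻ z, g (upP d z (t * y)) := by
    simpa only [finrank_euclideanSpace_fin, smul_upP] using
      lintegral_comp_smul volume (fun z => g (upP d z (t * y))) ht
  calc
    ∫⁻ x, g x ∂(coneMeasure d y).map _ = ∫⁻ p, g (p.1 • upP d p.2 y) ∂coneMeasure d y :=
      lintegral_map hg hmeas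
    _ = ∫⁻ t, ENNReal.ofReal (|y| * |t| ^ d) * ∫⁻ z, g (t • upP d z y) := by
      rw [coneMeasure, lintegral_prod (fun p : ℝ × Evec d => g (p.1 • upP d p.2 y))
        (hg.comp hmeas).aemeasurable]
      exact lintegral_withDensity_eq_lintegral_mul _ (by fun_prop)
        (hg.comp hmeas).lintegral_prod_right'
    _ = ∫⁻ t, ENNReal.ofReal |y| * ∫⁻ z, g (upP d z (t * y)) := by
      refine lintegral_congr_ae ((Measure.ae_ne volume 0).mono fun t ht => ?_)
      simp only [← hslice t ht, ENNReal.ofReal_mul (abs_nonneg y), mul_assoc]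
    _ = ∫⁻ s, ∫⁻ z, g (upP d z s) := by
      rw [lintegral_const_mul' _ _ ENNReal.ofReal_ne_top]
      simpa only [Module.finrank_self, pow_one, smul_eq_mul, mul_comm y] using
        lintegral_comp_smul volume (fun s : ℝ => ∫⁻ z, g (upP d z s)) hy
    _ = ∫⁻ x, g x := by
      rw [← (measurePreserving_upP d).lintegral_comp hg, Measure.volume_eq_prod,
        lintegral_prod (fun p : ℝ × Evec d => g (upP d p.2 p.1))
          (hg.comp (measurePreserving_upP d).measurable).aemeasurable]

theorem integral_line_mul_exp_neg_sq_div_two {d : ℕ} {F : Evec (d + 1) → ℝ}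
    (hF : ∀ c : ℝ, c ≠ 0 → ∀ x, F (c • x) = F x) (y : ℝ) {p : Evec (d + 1)} (hp : p ≠ 0) :
    ∫ t, F (t • p) * Real.exp (-‖t • p‖ ^ 2 / 2)
        ∂(volume : Measure ℝ).withDensity (fun t : ℝ => ENNReal.ofReal (|y| * |t| ^ d)) =
      2 * radialMoment d * (|y| / ‖p‖ ^ (d + 1) * F p) := by
  rw [integral_withDensity_eq_integral_toReal_smul (by fun_prop)
    (.of_forall fun t => ENNReal.ofReal_lt_top)]
  calc
    _ = ∫ t, |y| * F p * (|t| ^ d * Real.exp (-(t * ‖p‖) ^ 2 / 2)) := by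
      refine integral_congr_ae ((Measure.ae_ne volume 0).mono fun t ht => ?_)
      simp only [hF t ht, ENNReal.toReal_ofReal (by positivity : 0 ≤ |y| * |t| ^ d), norm_smul,
        Real.norm_eq_abs, mul_pow, sq_abs, smul_eq_mul]
      ring
    _ = _ := by
      rw [integral_const_mul,
        integral_abs_pow_mul_exp_neg_mul_sq_div_two d (norm_pos_iff.mpr hp)]
      ring

/-- Both sides, multiplied by `2 * radialMoment d`, are the integral of `F(x) e^{-|x|²/2}`: on the
left along the lines through the origin and the hyperplane, on the right in polar coordinates. -/
theorem integral_hyperplane_eq_half_integral_toSphere {d : ℕ} {F : Evec (d + 1) → ℝ}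
    (hF : ∀ c : ℝ, c ≠ 0 → ∀ x, F (c • x) = F x)
    (hsphere : Integrable (fun ζ : sphere (0 : Evec (d + 1)) 1 => F ζ)
      (volume : Measure (Evec (d + 1))).toSphere) {y : ℝ} (hy : y ≠ 0) :
    ∫ z, |y| / ‖upP d z y‖ ^ (d + 1) * F (upP d z y) =
      (∫ ζ, F ζ ∂(volume : Measure (Evec (d + 1))).toSphere) / 2 := by
  let g (x : Evec (d + 1)) : ℝ := F x * Real.exp (-‖x‖ ^ 2 / 2)
  have hF0 (c : ℝ) (hc : 0 < c) (x : Evec (d + 1)) : F (c • x) = c ^ 0 * F x := by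
    rw [hF c hc.ne', pow_zero, one_mul]
  have hpolar : ∫ x, g x =
      (∫ ζ, F ζ ∂(volume : Measure (Evec (d + 1))).toSphere) * radialMoment d := by
    rw [integral_mul_radial_eq_integral_toSphere_mul volume hF0 fun r => Real.exp (-r ^ 2 / 2),
      finrank_euclideanSpace_fin, add_zero, Nat.add_sub_cancel, radialMoment]
  have hg : Integrable g := integrable_mul_radial volume (w := fun r => Real.exp (-r ^ 2 / 2))
    hF0 hsphere (integrableOn_pow_mul_exp_neg_sq_div_two _)
  have hcone := measurePreserving_smul_upP d hy
  have hlines : ∫ x, g x =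
      2 * radialMoment d * ∫ z, |y| / ‖upP d z y‖ ^ (d + 1) * F (upP d z y) := by
    rw [← hcone.map_eq, integral_map hcone.aemeasurable
      (hcone.map_eq ▸ hg.aestronglyMeasurable), coneMeasure,
      integral_prod_symm (fun p : ℝ × Evec d => g (p.1 • upP d p.2 y))
        (hcone.integrable_comp_of_integrable hg), ← integral_const_mul]
    exact integral_congr_ae (.of_forall fun z =>
      integral_line_mul_exp_neg_sq_div_two hF y (upP_ne_zero z hy))
  apply mul_left_cancel₀ (radialMoment_pos d).ne'
  linarith

end HalfSpace

section SphereMean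

open MvPolynomial

theorem sum_neg_one_pow_mul_descFactorial_div_ascPochhammer {K : Type*} [Field K] {b : K}
    (hb : ∀ n : ℕ, b + n ≠ 0) (k : ℕ) :
    (b + k - 1) * ∑ n ∈ Finset.range (k + 1),
      (-1) ^ n * k.descFactorial n / (ascPochhammer K n).eval b = b - 1 := by
  let t (n : ℕ) : K := (-1) ^ n * k.descFactorial n / (ascPochhammer K n).eval b
  have hrec (n : ℕ) (hn : n ≤ k) : (b + n) * t (n + 1) = -(k - n) * t n := by
    have := hb n
    simp only [t, ascPochhammer_succ_eval, Nat.descFactorial_succ, pow_succ, Nat.cast_mul,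
      Nat.cast_sub hn]
    field_simp
  have htelescope (n : ℕ) (hn : n ∈ Finset.range (k + 1)) :
      (b + k - 1) * t n = (b + n - 1) * t n - (b + (n + 1 : ℕ) - 1) * t (n + 1) := by
    push_cast
    linear_combination hrec n (Finset.mem_range_succ_iff.mp hn)
  rw [Finset.mul_sum, Finset.sum_congr rfl htelescope, Finset.sum_range_sub']
  simp [t]

theorem eval_smul_add_eq_sum_of_isHomogeneous {σ K : Type*} [Finite σ] [Field K] [CharZero K]
    {P : MvPolynomial σ K} {k : ℕ} (hP : P.IsHomogeneous k) (a : K) (x u : σ → K) :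
    eval (a • x + u) P = ∑ n ∈ Finset.range (k + 1),
      a ^ n / (k - n).factorial * eval x ((dirDeriv u)^[k - n] P) := by
  rw [eval_add_eq_sum_iterate_dirDeriv _ _ hP.totalDegree_le, ← Finset.sum_range_reflect]
  refine Finset.sum_congr rfl fun n hn => ?_
  have hnk : n ≤ k := Finset.mem_range_succ_iff.mp hn
  rw [Nat.add_sub_cancel, eval_smul_of_isHomogeneous (isHomogeneous_iterate_dirDeriv hP u _),
    Nat.sub_sub_self hnk]
  ring

variable {σ : Type*} [Fintype σ] [Nonempty σ]

theorem integral_toSphere_inner_pow_mul_of_harmonic (u : EuclideanSpace ℝ σ) {n : ℕ}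
    {Q : MvPolynomial σ ℝ} (hQ : Q.IsHomogeneous n) (hΔ : mvLaplacian Q = 0) :
    2 ^ n * (ascPochhammer ℝ n).eval (Fintype.card σ / 2 : ℝ) *
        ∫ ζ, ⟪ζ.1, u⟫ ^ n * eval ζ.1.ofLp Q
          ∂(volume : Measure (EuclideanSpace ℝ σ)).toSphere =
      n.factorial * eval u.ofLp Q *
        (volume : Measure (EuclideanSpace ℝ σ)).toSphere.real Set.univ := by
  have hcard : ((Fintype.card σ - 1 : ℕ) + 1 : ℝ) = Fintype.card σ := by
    exact_mod_cast Nat.sub_add_cancel Fintype.card_pos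
  have hLQ : (linForm u.ofLp ^ n * Q).IsHomogeneous (2 * n) := by
    simpa only [one_mul, two_mul] using ((isHomogeneous_linForm u.ofLp).pow n).mul hQ
  have h := gaussianIntegral_linForm_pow_mul_of_harmonic u.ofLp hQ hΔ
  rw [gaussianIntegral_eq_integral_toSphere_mul hLQ, radialMoment_add_two_mul, hcard,
    gaussianIntegral_eq_integral_toSphere_mul (isHomogeneous_one σ ℝ)] at h
  simp only [map_mul, map_pow, eval_linForm_eq_inner, map_one, integral_const, smul_eq_mul,
    mul_one, add_zero] at h
  apply mul_right_cancel₀ (radialMoment_pos (Fintype.card σ - 1)).ne'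
  linear_combination h

theorem factorial_mul_descFactorial_sub {n k : ℕ} (hnk : n ≤ k) :
    n.factorial * k.descFactorial (k - n) = (k - n).factorial * k.descFactorial n := by
  have h := Nat.factorial_mul_descFactorial (Nat.sub_le k n)
  rw [Nat.sub_sub_self hnk] at h
  rw [h, Nat.factorial_mul_descFactorial hnk]

theorem integral_toSphere_inner_pow_mul_iterate_dirDeriv (u : EuclideanSpace ℝ σ) {n k : ℕ}
    {P : MvPolynomial σ ℝ} (hP : P.IsHomogeneous k) (hΔ : mvLaplacian P = 0) (hnk : n ≤ k) :
    (-2) ^ n / (k - n).factorial *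
        ∫ ζ, ⟪ζ.1, u⟫ ^ n * eval ζ.1.ofLp ((dirDeriv u.ofLp)^[k - n] P)
          ∂(volume : Measure (EuclideanSpace ℝ σ)).toSphere =
      (-1) ^ n * k.descFactorial n / (ascPochhammer ℝ n).eval (Fintype.card σ / 2 : ℝ) *
        ((volume : Measure (EuclideanSpace ℝ σ)).toSphere.real Set.univ * eval u.ofLp P) := by
  have hhom : ((dirDeriv u.ofLp)^[k - n] P).IsHomogeneous n := by
    simpa only [Nat.sub_sub_self hnk] using isHomogeneous_iterate_dirDeriv hP u.ofLp (k - n)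
  have hharm : mvLaplacian ((dirDeriv u.ofLp)^[k - n] P) = 0 := by
    rw [mvLaplacian_iterate_dirDeriv, hΔ, iterate_map_zero]
  have hpair := integral_toSphere_inner_pow_mul_of_harmonic u hhom hharm
  rw [eval_self_iterate_dirDeriv hP] at hpair
  have hfactorial : (n.factorial * k.descFactorial (k - n) : ℝ) =
      (k - n).factorial * k.descFactorial n := mod_cast factorial_mul_descFactorial_sub hnk
  have hpoch : (ascPochhammer ℝ n).eval (Fintype.card σ / 2 : ℝ) ≠ 0 :=
    (ascPochhammer_pos n _ (by simp [Fintype.card_pos])).ne'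
  rw [show (-2 : ℝ) = -1 * 2 by norm_num, mul_pow, div_mul_eq_mul_div, div_mul_eq_mul_div,
    div_eq_div_iff (by positivity) hpoch]
  linear_combination (-1) ^ n * (hpair + eval u.ofLp P *
    (volume : Measure (EuclideanSpace ℝ σ)).toSphere.real Set.univ * hfactorial)

theorem integral_toSphere_eval_reflection (u : EuclideanSpace ℝ σ) {k : ℕ}
    {P : MvPolynomial σ ℝ} (hP : P.IsHomogeneous k) (hΔ : mvLaplacian P = 0) :
    (Fintype.card σ + 2 * k - 2) *
        ∫ ζ, eval (u - (2 * ⟪ζ.1, u⟫) • ζ.1).ofLp P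
          ∂(volume : Measure (EuclideanSpace ℝ σ)).toSphere =
      (Fintype.card σ - 2) *
        ((volume : Measure (EuclideanSpace ℝ σ)).toSphere.real Set.univ * eval u.ofLp P) := by
  set ω := (volume : Measure (EuclideanSpace ℝ σ)).toSphere.real Set.univ
  have hb (n : ℕ) : (Fintype.card σ / 2 : ℝ) + n ≠ 0 := by
    have : 0 < Fintype.card σ := Fintype.card_pos
    positivity
  let D (n : ℕ) : MvPolynomial σ ℝ := (dirDeriv u.ofLp)^[k - n] P
  have htaylor (ζ : EuclideanSpace ℝ σ) : eval (u - (2 * ⟪ζ, u⟫) • ζ).ofLp P =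
      ∑ n ∈ Finset.range (k + 1),
        (-2) ^ n / (k - n).factorial * (⟪ζ, u⟫ ^ n * eval ζ.ofLp (D n)) := by
    have h := eval_smul_add_eq_sum_of_isHomogeneous hP (-2 * ⟪ζ, u⟫) ζ.ofLp u.ofLp
    simp only [mul_pow, mul_div_right_comm, mul_assoc] at h
    rw [← h, sub_eq_neg_add, ← neg_smul, neg_mul_eq_neg_mul]
    rfl
  have hint (n : ℕ) : Integrable (fun ζ : sphere (0 : EuclideanSpace ℝ σ) 1 =>
      (-2) ^ n / (k - n).factorial * (⟪ζ.1, u⟫ ^ n * eval ζ.1.ofLp (D n)))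
      (volume : Measure (EuclideanSpace ℝ σ)).toSphere := by
    simpa only [map_mul, map_pow, eval_linForm_eq_inner] using
      (integrable_eval_toSphere (linForm u.ofLp ^ n * D n)).const_mul _
  simp only [htaylor]
  rw [integral_finsetSum _ fun n _ => hint n]
  simp only [integral_const_mul]
  rw [Finset.sum_congr rfl fun n hn => integral_toSphere_inner_pow_mul_iterate_dirDeriv u hP hΔ
    (Finset.mem_range_succ_iff.mp hn), ← Finset.sum_mul]
  linear_combination 2 * (ω * eval u.ofLp P) *
    sum_neg_one_pow_mul_descFactorial_div_ascPochhammer hb k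

end SphereMean

section Poisson

open MvPolynomial

theorem reflv_smul {m : ℕ} {c : ℝ} (hc : c ≠ 0) (a u : Evec m) :
    reflv (c • a) u = reflv a u := by
  rw [reflv, reflv, smul_smul, real_inner_smul_left, norm_smul, mul_pow, Real.norm_eq_abs, sq_abs]
  congr 2
  field_simp

theorem reflv_of_norm_eq_one {m : ℕ} {a : Evec m} (ha : ‖a‖ = 1) (u : Evec m) :
    reflv a u = u - (2 * ⟪a, u⟫) • a := by
  rw [reflv, ha, one_pow, div_one]

theorem pdv_eval {m : ℕ} (i : Fin m) (P : MvPolynomial (Fin m) ℝ) :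
    pdv i (fun x : Evec m => eval x.ofLp P) = fun x => eval x.ofLp (pderiv i P) := by
  funext x
  rw [pdv, fderiv_eval_apply, ← dirDeriv_single]
  rfl

theorem lapl_eval {m : ℕ} (P : MvPolynomial (Fin m) ℝ) (x : Evec m) :
    lapl (fun x : Evec m => eval x.ofLp P) x = eval x.ofLp (mvLaplacian P) := by
  simp only [lapl, pdv_eval, mvLaplacian_apply, map_sum]

theorem IsHk.exists_mvPolynomial {m k : ℕ} {f : Evec m → ℝ} (hf : IsHk m k f) :
    ∃ P : MvPolynomial (Fin m) ℝ, P.IsHomogeneous k ∧ mvLaplacian P = 0 ∧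
      f = fun x => eval x.ofLp P := by
  obtain ⟨⟨P, hP⟩, hhom, hharm⟩ := hf
  obtain rfl : f = fun x => eval x.ofLp P := funext hP
  refine ⟨P, isHomogeneous_of_eval_smul fun c x => hhom c (WithLp.toLp 2 x), ?_, rfl⟩
  refine MvPolynomial.funext fun x => ?_
  rw [← WithLp.ofLp_toLp 2 x, ← lapl_eval, hharm, map_zero]

theorem omegaS_eq_toSphere_real_univ (m : ℕ) :
    omegaS m = (volume : Measure (Evec m)).toSphere.real Set.univ := by
  rw [omegaS, sphereM, Measure.map_apply measurable_subtype_coe .univ, Set.preimage_univ,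
    Measure.real]

theorem omegaS_pos {m : ℕ} [NeZero m] : 0 < omegaS m := by
  rw [omegaS_eq_toSphere_real_univ]
  have : NeZero (volume : Measure (Evec m)).toSphere := ⟨Measure.toSphere_ne_zero _⟩
  exact measureReal_univ_pos

theorem stmt_0_general (d k : ℕ) {f : Evec (d + 1) → ℝ} (hf : IsHk (d + 1) k f)
    (u : Evec (d + 1)) {y : ℝ} (hy : y ≠ 0) :
    (d + 2 * k - 1) *
        (∫ x' : Evec d, |y| / ‖upP d x' y‖ ^ (d + 1) * f (reflv (upP d x' y) u)) =
      (d - 1) * omegaS (d + 1) / 2 * f u := by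
  obtain ⟨P, hhom, hharm, rfl⟩ := hf.exists_mvPolynomial
  have hsphere (ζ : sphere (0 : Evec (d + 1)) 1) :
      eval (reflv ζ.1 u).ofLp P = eval (u - (2 * ⟪ζ.1, u⟫) • ζ.1).ofLp P := by
    rw [reflv_of_norm_eq_one (norm_eq_of_mem_sphere ζ)]
  have hintegrable : Integrable
      (fun ζ : sphere (0 : Evec (d + 1)) 1 => eval (reflv ζ.1 u).ofLp P)
      (volume : Measure (Evec (d + 1))).toSphere := by
    simp only [hsphere]
    refine Continuous.integrable_of_hasCompactSupport ?_ (HasCompactSupport.of_compactSpace _)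
    exact (differentiable_eval P).continuous.comp (by fun_prop)
  have hlines := integral_hyperplane_eq_half_integral_toSphere
    (F := fun a => eval (reflv a u).ofLp P) (fun c hc x => by simp only [reflv_smul hc])
    hintegrable hy
  have hmean := integral_toSphere_eval_reflection u hhom hharm
  simp only [← hsphere, Fintype.card_fin, ← omegaS_eq_toSphere_real_univ] at hmean
  push_cast at hmean
  linear_combination (d + 2 * k - 1 : ℝ) * hlines + hmean / 2

theorem cmk_succ (d k : ℕ) :
    cmk (d + 1) k = 2 * (d + 2 * k - 1) / ((d - 1) * omegaS (d + 1)) := by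
  rw [cmk]
  push_cast
  ring_nf

end Poisson

/-- Lemma 1: reproducing property of the half-space Poisson kernel.
Here `m = d+1 ≥ 3`. -/
theorem stmt_0 (d k : ℕ) (hm : 3 ≤ d + 1) (hk : 1 ≤ k)
    (f : Evec (d + 1) → ℝ) (hf : IsHk (d + 1) k f) (u : Evec (d + 1))
    (y : ℝ) (hy : 0 < y) :
    cmk (d + 1) k *
      (∫ x' : Evec d, (y / ‖upP d x' y‖ ^ (d + 1)) * f (reflv (upP d x' y) u)) = f u := by
  have hd : (0 : ℝ) < d - 1 := sub_pos.mpr (by exact_mod_cast (by omega : 1 < d))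
  have hω : 0 < omegaS (d + 1) := omegaS_pos
  have h := stmt_0_general d k hf u hy.ne'
  rw [abs_of_pos hy] at h
  rw [cmk_succ, div_mul_eq_mul_div, div_eq_iff (by positivity)]
  linear_combination 2 * h
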